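/- The interchange law holds in the probabilistic automata model with respect to simulation: for probabilistic automata P, Q, P', Q' (with P, P' and Q, Q' having pairwise disjoint state spaces) and any frame A ⊆ E, (P ∥_A Q) · (P' ∥_A Q') ≤ (P · P') ∥_A (Q · Q'). -/

import Mathlib

open scoped ENNReal

namespace PCKA

/-- A probabilistic automaton over the (non-silent) action alphabet `α`, with state
space `σ`.  Transition labels are `Option α`, where `none` plays the role of the
silent action `τ`; `trans x a μ` means `x —a→ μ` where `μ` is a (countably
supported) probability distribution over states, `init` is the initial
distribution and `final` the set of final states. -/
structure PAut (α : Type) (σ : Type) where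
  trans : σ → Option α → PMF σ → Prop
  init : PMF σ
  final : Set σ

/-- The lifting `S̄ ⊆ D(X) × D(Y)` of a relation `S ⊆ X × D(Y)`: `μ S̄ ν` iff there
are weights `p n` summing to `1`, states `x n` and distributions `νs n` with
`μ = Σ_n p n · δ_{x n}`, `x n S νs n` for each `n`, and `ν = Σ_n p n · νs n`. -/
def Lift {X Y : Type} (S : X → PMF Y → Prop) (μ : PMF X) (ν : PMF Y) : Prop :=
  ∃ (p : ℕ → ℝ≥0∞) (x : ℕ → X) (νs : ℕ → PMF Y),
    (∑' n, p n) = 1 ∧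
    (∀ s, μ s = ∑' n, p n * (PMF.pure (x n)) s) ∧
    (∀ n, S (x n) (νs n)) ∧
    (∀ t, ν t = ∑' n, p n * (νs n) t)

/-- The double lifting `T̿ ⊆ D(X) × D(Z)` of a relation `T ⊆ X × Z`, via a weight
function `w`. -/
def DLift {X Z : Type} (T : X → Z → Prop) (μ : PMF X) (ψ : PMF Z) : Prop :=
  ∃ w : X → Z → ℝ≥0∞,
    (∀ x z, 0 < w x z → T x z) ∧
    (∀ x, (∑' z, w x z) = μ x) ∧
    (∀ z, (∑' x, w x z) = ψ z)

/-- Flattening `π : D(D(Y)) → D(Y)`, `π(ψ) = Σ_{ν} ψ(ν)·ν`. -/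
noncomputable def flat {Y : Type} (ψ : PMF (PMF Y)) : PMF Y := ψ.bind id

/-- Single transition step, with the τ-transitions extended by reflexivity
(`x —τ→ δ_x` is always allowed). -/
def step {α σ : Type} (P : PAut α σ) (a : Option α) (x : σ) (μ : PMF σ) : Prop :=
  P.trans x a μ ∨ (a = none ∧ μ = PMF.pure x)

/-- Weak internal moves `⇒`: the reflexive-transitive closure of the lifted
(extended) τ-transition relation on distributions. -/
def WeakTau {α σ : Type} (P : PAut α σ) : PMF σ → PMF σ → Prop :=
  Relation.ReflTransGen (Lift (step P none))

/-- Weak `a`-transition `μ ⇒^a μ'`: `μ ⇒ μ₁ —ā→ μ₂ ⇒ μ'`. -/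
def WeakStep {α σ : Type} (P : PAut α σ) (a : Option α) (μ μ' : PMF σ) : Prop :=
  ∃ μ₁ μ₂, WeakTau P μ μ₁ ∧ Lift (step P a) μ₁ μ₂ ∧ WeakTau P μ₂ μ'

/-- A probabilistic simulation from `P` to `Q` (Deng et al. style). -/
structure IsSimulation {α σ τ' : Type} (P : PAut α σ) (Q : PAut α τ')
    (S : σ → PMF τ' → Prop) : Prop where
  init : ∃ ν₀', WeakTau Q Q.init ν₀' ∧ Lift S P.init ν₀'
  step : ∀ x a μ', P.trans x a μ' → ∀ ν, S x ν →
    ∃ ν', WeakStep Q a ν ν' ∧ Lift S μ' ν'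
  final : ∀ x ν, x ∈ P.final → S x ν →
    ∃ ν', WeakTau Q ν ν' ∧ ∀ y ∈ ν'.support, y ∈ Q.final

/-- A probabilistic weak forward simulation from `P` to `Q` (Segala style). -/
structure IsWFSimulation {α σ τ' : Type} (P : PAut α σ) (Q : PAut α τ')
    (S : σ → PMF τ' → Prop) : Prop where
  init : ∃ ψ₀ : PMF (PMF τ'), DLift S P.init ψ₀ ∧ WeakTau Q Q.init (flat ψ₀)
  step : ∀ x a μ', P.trans x a μ' → ∀ ν, S x ν →
    ∃ ψ : PMF (PMF τ'), WeakStep Q a ν (flat ψ) ∧ DLift S μ' ψ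
  final : ∀ x ν, x ∈ P.final → S x ν →
    ∃ ψ : PMF (PMF τ'), (∀ ρ ∈ ψ.support, ∀ y ∈ ρ.support, y ∈ Q.final) ∧
      WeakTau Q ν (flat ψ)

/-- `P ≤ Q`: there exists a probabilistic simulation from `P` to `Q`. -/
def Sim {α σ τ' : Type} (P : PAut α σ) (Q : PAut α τ') : Prop :=
  ∃ S, IsSimulation P Q S

/-- Simulation equivalence `P ≡ Q`. -/
def SimEquiv {α σ τ' : Type} (P : PAut α σ) (Q : PAut α τ') : Prop :=
  Sim P Q ∧ Sim Q P

/-- Convex combination `p·μ + (1−p)·ν` of two distributions. -/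
noncomputable def mix {X : Type} (p : ℝ≥0∞) (hp : p ≤ 1) (μ ν : PMF X) : PMF X :=
  ⟨fun x => p * μ x + (1 - p) * ν x, by
    refine ENNReal.summable.hasSum_iff.mpr ?_
    rw [ENNReal.tsum_add, ENNReal.tsum_mul_left, ENNReal.tsum_mul_left,
      μ.tsum_coe, ν.tsum_coe, mul_one, mul_one, add_tsub_cancel_of_le hp]⟩

/-- Product distribution `μ × ν`, with `(μ × ν)(x,y) = μ(x)·ν(y)`. -/
noncomputable def pprod {X Y : Type} (μ : PMF X) (ν : PMF Y) : PMF (X × Y) :=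
  μ.bind fun x => ν.map fun y => (x, y)

/-- The skip automaton `1`: one state, no transitions, that state is final. -/
noncomputable def skip (α : Type) : PAut α Unit :=
  ⟨fun _ _ _ => False, PMF.pure (), Set.univ⟩

/-- The deadlock automaton `0`: one state, no transitions, no final state. -/
noncomputable def deadlock (α : Type) : PAut α Unit :=
  ⟨fun _ _ _ => False, PMF.pure (), ∅⟩

/-- Nondeterministic choice `P + Q`: disjoint union of the two automata (realised
by the sum type) plus a fresh initial state `z = none` with `z —τ→ μ₀` and
`z —τ→ ν₀`. -/
noncomputable def nchoice {α σ τ' : Type} (P : PAut α σ) (Q : PAut α τ') :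
    PAut α (Option (σ ⊕ τ')) where
  trans := fun s a μ =>
    match s with
    | none => a = none ∧
        (μ = P.init.map (fun x => some (Sum.inl x)) ∨
         μ = Q.init.map (fun y => some (Sum.inr y)))
    | some (Sum.inl x) => ∃ μ', P.trans x a μ' ∧ μ = μ'.map (fun x => some (Sum.inl x))
    | some (Sum.inr y) => ∃ ν', Q.trans y a ν' ∧ μ = ν'.map (fun y => some (Sum.inr y))
  init := PMF.pure none
  final := {s | (∃ x ∈ P.final, s = some (Sum.inl x)) ∨ (∃ y ∈ Q.final, s = some (Sum.inr y))}

/-- Sequential composition `P · Q`: disjoint union (realised by the sum type),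
with a τ-transition from each final state of `P` to the initial distribution of
`Q`; initial distribution that of `P`, final states those of `Q`. -/
noncomputable def pseq {α σ τ' : Type} (P : PAut α σ) (Q : PAut α τ') :
    PAut α (σ ⊕ τ') where
  trans := fun s a μ =>
    match s with
    | Sum.inl x =>
        (∃ μ', P.trans x a μ' ∧ μ = μ'.map Sum.inl) ∨
        (a = none ∧ x ∈ P.final ∧ μ = Q.init.map Sum.inr)
    | Sum.inr y => ∃ ν', Q.trans y a ν' ∧ μ = ν'.map Sum.inr
  init := P.init.map Sum.inl
  final := {s | ∃ y ∈ Q.final, s = Sum.inr y}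

/-- Kleene star `P*`: a fresh state `z = none` which is initial and the only
final state, with `z —τ→ μ₀` and `x —τ→ δ_z` for each final state `x` of `P`. -/
noncomputable def pstar {α σ : Type} (P : PAut α σ) : PAut α (Option σ) where
  trans := fun s a μ =>
    match s with
    | none => a = none ∧ μ = P.init.map some
    | some x =>
        (∃ μ', P.trans x a μ' ∧ μ = μ'.map some) ∨
        (a = none ∧ x ∈ P.final ∧ μ = PMF.pure none)
  init := PMF.pure none
  final := {none}

/-- Probabilistic choice `P ⊕_p Q`: disjoint union with initial distribution
`p·μ₀ + (1−p)·ν₀`. -/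
noncomputable def pchoice {α σ τ' : Type} (p : ℝ≥0∞) (hp : p ≤ 1)
    (P : PAut α σ) (Q : PAut α τ') : PAut α (σ ⊕ τ') where
  trans := fun s a μ =>
    match s with
    | Sum.inl x => ∃ μ', P.trans x a μ' ∧ μ = μ'.map Sum.inl
    | Sum.inr y => ∃ ν', Q.trans y a ν' ∧ μ = ν'.map Sum.inr
  init := mix p hp (P.init.map Sum.inl) (Q.init.map Sum.inr)
  final := {s | (∃ x ∈ P.final, s = Sum.inl x) ∨ (∃ y ∈ Q.final, s = Sum.inr y)}

/-- CSP-style parallel composition `P ∥_A Q` synchronising on the frame `A`: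
actions in `A` must be performed jointly, all other actions (including τ) are
interleaved. -/
noncomputable def par {α σ τ' : Type} (A : Set α) (P : PAut α σ) (Q : PAut α τ') :
    PAut α (σ × τ') where
  trans := fun s a μπ => ∃ μ ν, μπ = pprod μ ν ∧
    ((∃ b ∈ A, a = some b ∧ P.trans s.1 a μ ∧ Q.trans s.2 a ν) ∨
     ((∀ b ∈ A, a ≠ some b) ∧ P.trans s.1 a μ ∧ ν = PMF.pure s.2) ∨
     ((∀ b ∈ A, a ≠ some b) ∧ Q.trans s.2 a ν ∧ μ = PMF.pure s.1))
  init := pprod P.init Q.init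
  final := {s | s.1 ∈ P.final ∧ s.2 ∈ Q.final}

/-!
Each component of `(P ∥_A Q) · (P' ∥_A Q')` embeds transition by transition into
`(P · P') ∥_A (Q · Q')`, so the only step that needs an argument is the τ-step from a final state
`(x, y)` of `P ∥_A Q` to `P'.init × Q'.init`. In `(P · P') ∥_A (Q · Q')` it is matched by letting
the two components take their sequencing τ-steps one after the other; interleaving two weak
τ-moves yields the product of their results, because τ never synchronises.
-/

section Lifting

variable {X Y : Type} {S : X → PMF Y → Prop}

theorem exists_pmf_nat_map_eq {ι : Type*} (μ : PMF ι) :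
    ∃ (p : PMF ℕ) (f : ℕ → ι), p.map f = μ ∧ Set.range f = μ.support := by
  obtain ⟨f, hf⟩ := μ.support_countable.exists_eq_range μ.support_nonempty
  refine ⟨μ.map (Function.invFun f), f, ?_, hf.symm⟩
  have h_inv (i : ι) (hi : i ∈ μ.support) : f (Function.invFun f i) = i :=
    Function.invFun_eq (Set.mem_range.mp (hf ▸ hi))
  calc (μ.map (Function.invFun f)).map f
      = μ.bindOnSupport fun i _ => PMF.pure (f (Function.invFun f i)) := by
        rw [PMF.map_comp, PMF.bindOnSupport_eq_bind]
        rfl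
    _ = μ.bindOnSupport fun i _ => PMF.pure i := by
        congr! 3 with i hi
        exact congrArg PMF.pure (h_inv i hi)
    _ = μ := μ.bindOnSupport_pure

theorem lift_iff_exists_pmf {μ : PMF X} {ν : PMF Y} :
    Lift S μ ν ↔ ∃ (p : PMF ℕ) (x : ℕ → X) (νs : ℕ → PMF Y),
      (∀ n, S (x n) (νs n)) ∧ p.map x = μ ∧ p.bind νs = ν := by
  constructor
  · rintro ⟨p, x, νs, hp, hμ, hS, hν⟩
    exact ⟨⟨p, ENNReal.summable.hasSum_iff.mpr hp⟩, x, νs, hS,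
      PMF.ext fun s => (hμ s).symm, PMF.ext fun t => (hν t).symm⟩
  · rintro ⟨p, x, νs, hS, rfl, rfl⟩
    exact ⟨p, x, νs, p.tsum_coe, fun _ => rfl, hS, fun _ => rfl⟩

theorem lift_map_bind {ι : Type*} (p : PMF ι) {x : ι → X} {νs : ι → PMF Y}
    (h : ∀ i ∈ p.support, S (x i) (νs i)) : Lift S (p.map x) (p.bind νs) := by
  obtain ⟨q, f, rfl, hf⟩ := exists_pmf_nat_map_eq p
  exact lift_iff_exists_pmf.mpr ⟨q, x ∘ f, νs ∘ f, fun n => h _ (hf ▸ Set.mem_range_self n),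
    (q.map_comp f x).symm, (q.bind_map f νs).symm⟩

theorem lift_bind (μ : PMF X) {g : X → PMF Y} (h : ∀ x ∈ μ.support, S x (g x)) :
    Lift S μ (μ.bind g) := by
  simpa only [id_eq, PMF.map_id] using lift_map_bind μ (x := id) h

theorem lift_pure {x : X} {ν : PMF Y} (h : S x ν) : Lift S (PMF.pure x) ν := by
  simpa only [PMF.pure_map, PMF.pure_bind] using
    lift_map_bind (PMF.pure ()) (x := fun _ => x) (νs := fun _ => ν) fun _ _ => h

end Lifting

section Product

variable {X Y X' Y' Z : Type}

theorem pprod_map (f : X → X') (g : Y → Y') (μ : PMF X) (ν : PMF Y) :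
    pprod (μ.map f) (ν.map g) = (pprod μ ν).map (Prod.map f g) := by
  simp only [pprod, PMF.map_bind, PMF.bind_map, PMF.map_comp]
  rfl

theorem pprod_pure (x : X) (y : Y) : pprod (PMF.pure x) (PMF.pure y) = PMF.pure (x, y) := by
  simp only [pprod, PMF.pure_bind, PMF.pure_map]

theorem pprod_bind_left (p : PMF Z) (f : Z → PMF X) (ν : PMF Y) :
    pprod (p.bind f) ν = (pprod p ν).bind fun s => pprod (f s.1) (PMF.pure s.2) := by
  simp only [pprod, PMF.bind_bind, PMF.bind_map, PMF.pure_map]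
  refine congrArg p.bind (funext fun z => ?_)
  exact PMF.bind_comm (f z) ν fun x y => PMF.pure (x, y)

theorem pprod_bind_right (μ : PMF X) (p : PMF Z) (g : Z → PMF Y) :
    pprod μ (p.bind g) = (pprod μ p).bind fun s => pprod (PMF.pure s.1) (g s.2) := by
  simp only [pprod, PMF.bind_bind, PMF.map_bind, PMF.bind_map, PMF.pure_bind]
  rfl

end Product

section WeakMoves

variable {α σ τ' : Type} {P : PAut α σ} {Q : PAut α τ'}

theorem weakTau_of_trans {x : σ} {μ : PMF σ} (h : P.trans x none μ) :
    WeakTau P (PMF.pure x) μ :=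
  .single (lift_pure (.inl h))

theorem weakStep_of_trans {x : σ} {a : Option α} {μ : PMF σ} (h : P.trans x a μ) :
    WeakStep P a (PMF.pure x) μ :=
  ⟨_, _, .refl, lift_pure (.inl h), .refl⟩

theorem lift_step_none_refl (μ : PMF σ) : Lift (step P none) μ μ := by
  simpa only [PMF.bind_pure] using
    lift_bind μ (S := step P none) (g := PMF.pure) fun _ _ => .inr ⟨rfl, rfl⟩

theorem WeakTau.weakStep {μ ν : PMF σ} (h : WeakTau P μ ν) : WeakStep P none μ ν :=
  ⟨_, _, h, lift_step_none_refl ν, .refl⟩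

variable {A : Set α}

theorem step_none_par_left {x : σ} {μ : PMF σ} (h : step P none x μ) (y : τ') :
    step (par A P Q) none (x, y) (pprod μ (PMF.pure y)) := by
  rcases h with h | ⟨-, rfl⟩
  · exact .inl ⟨_, _, rfl, .inr (.inl ⟨by simp, h, rfl⟩)⟩
  · exact .inr ⟨rfl, pprod_pure x y⟩

theorem step_none_par_right (x : σ) {y : τ'} {ν : PMF τ'} (h : step Q none y ν) :
    step (par A P Q) none (x, y) (pprod (PMF.pure x) ν) := by
  rcases h with h | ⟨-, rfl⟩
  · exact .inl ⟨_, _, rfl, .inr (.inr ⟨by simp, h, rfl⟩)⟩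
  · exact .inr ⟨rfl, pprod_pure x y⟩

theorem lift_step_none_par_left {μ μ' : PMF σ} (h : Lift (step P none) μ μ') (ν : PMF τ') :
    Lift (step (par A P Q) none) (pprod μ ν) (pprod μ' ν) := by
  obtain ⟨p, x, μs, hstep, rfl, rfl⟩ := lift_iff_exists_pmf.mp h
  have hmap : pprod (p.map x) ν = (pprod p ν).map (Prod.map x id) := by
    rw [← pprod_map, PMF.map_id]
  rw [hmap, pprod_bind_left]
  exact lift_map_bind _ fun s _ => step_none_par_left (hstep s.1) s.2

theorem lift_step_none_par_right (μ : PMF σ) {ν ν' : PMF τ'} (h : Lift (step Q none) ν ν') :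
    Lift (step (par A P Q) none) (pprod μ ν) (pprod μ ν') := by
  obtain ⟨p, y, νs, hstep, rfl, rfl⟩ := lift_iff_exists_pmf.mp h
  have hmap : pprod μ (p.map y) = (pprod μ p).map (Prod.map id y) := by
    rw [← pprod_map, PMF.map_id]
  rw [hmap, pprod_bind_right]
  exact lift_map_bind _ fun s _ => step_none_par_right s.1 (hstep s.2)

theorem WeakTau.par {μ μ' : PMF σ} {ν ν' : PMF τ'} (hP : WeakTau P μ μ')
    (hQ : WeakTau Q ν ν') : WeakTau (par A P Q) (pprod μ ν) (pprod μ' ν') :=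
  (hP.lift (pprod · ν) fun _ _ h => lift_step_none_par_left h ν).trans
    (hQ.lift (pprod μ') fun _ _ h => lift_step_none_par_right μ' h)

theorem weakTau_pseq_of_mem_final {x : σ} (hx : x ∈ P.final) :
    WeakTau (pseq P Q) (PMF.pure (Sum.inl x)) (Q.init.map Sum.inr) :=
  weakTau_of_trans (.inr ⟨rfl, hx, rfl⟩)

end WeakMoves

section TransitionHomomorphisms

variable {α σ₁ σ₂ σ₃ σ₄ : Type}

/-- A map of state spaces along which every transition of `P` is a transition of `Q`. Initial
distributions and final states are left unconstrained, so that the inclusions of both components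
into a sequential composition qualify. -/
def IsTransHom (P : PAut α σ₁) (Q : PAut α σ₂) (f : σ₁ → σ₂) : Prop :=
  ∀ ⦃x a μ⦄, P.trans x a μ → Q.trans (f x) a (μ.map f)

theorem isTransHom_pseq_inl (P : PAut α σ₁) (Q : PAut α σ₂) :
    IsTransHom P (pseq P Q) Sum.inl :=
  fun _ _ μ h => .inl ⟨μ, h, rfl⟩

theorem isTransHom_pseq_inr (P : PAut α σ₁) (Q : PAut α σ₂) :
    IsTransHom Q (pseq P Q) Sum.inr :=
  fun _ _ μ h => ⟨μ, h, rfl⟩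

theorem IsTransHom.par {P : PAut α σ₁} {Q : PAut α σ₂} {P' : PAut α σ₃} {Q' : PAut α σ₄}
    {f : σ₁ → σ₃} {g : σ₂ → σ₄} (hf : IsTransHom P P' f) (hg : IsTransHom Q Q' g) (A : Set α) :
    IsTransHom (par A P Q) (par A P' Q') (Prod.map f g) := by
  rintro ⟨x, y⟩ a _ ⟨μ, ν, rfl, h⟩
  refine ⟨μ.map f, ν.map g, (pprod_map f g μ ν).symm, ?_⟩
  rcases h with ⟨b, hb, hab, hP, hQ⟩ | ⟨ha, hP, rfl⟩ | ⟨ha, hQ, rfl⟩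
  · exact .inl ⟨b, hb, hab, hf hP, hg hQ⟩
  · exact .inr (.inl ⟨ha, hf hP, PMF.pure_map g y⟩)
  · exact .inr (.inr ⟨ha, hg hQ, PMF.pure_map f x⟩)

end TransitionHomomorphisms

section FunctionalSimulations

variable {α σ₁ σ₂ σ₃ : Type} {P : PAut α σ₁} {Q : PAut α σ₂} {R : PAut α σ₃}

theorem sim_of_map (f : σ₁ → σ₃) (hinit : WeakTau R R.init (P.init.map f))
    (hstep : ∀ ⦃x a μ⦄, P.trans x a μ → WeakStep R a (PMF.pure (f x)) (μ.map f))
    (hfinal : ∀ x ∈ P.final, ∃ ν, WeakTau R (PMF.pure (f x)) ν ∧ ν.support ⊆ R.final) :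
    Sim P R := by
  have hlift (μ : PMF σ₁) : Lift (fun x ν => ν = PMF.pure (f x)) μ (μ.map f) :=
    lift_bind μ fun _ _ => rfl
  refine ⟨fun x ν => ν = PMF.pure (f x), ⟨_, hinit, hlift _⟩, ?_, ?_⟩
  · rintro x a μ h _ rfl
    exact ⟨μ.map f, hstep h, hlift μ⟩
  · rintro x _ hx rfl
    exact hfinal x hx

theorem sim_pseq_of_maps (f : σ₁ → σ₃) (g : σ₂ → σ₃)
    (hinit : WeakTau R R.init (P.init.map f))
    (hf : ∀ ⦃x a μ⦄, P.trans x a μ → WeakStep R a (PMF.pure (f x)) (μ.map f))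
    (hconnect : ∀ x ∈ P.final, WeakTau R (PMF.pure (f x)) (Q.init.map g))
    (hg : ∀ ⦃y a ν⦄, Q.trans y a ν → WeakStep R a (PMF.pure (g y)) (ν.map g))
    (hfinal : ∀ y ∈ Q.final, ∃ ν, WeakTau R (PMF.pure (g y)) ν ∧ ν.support ⊆ R.final) :
    Sim (pseq P Q) R := by
  have hmap_inl (μ : PMF σ₁) : (μ.map Sum.inl).map (Sum.elim f g) = μ.map f := by
    rw [PMF.map_comp, Sum.elim_comp_inl]
  have hmap_inr (ν : PMF σ₂) : (ν.map Sum.inr).map (Sum.elim f g) = ν.map g := by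
    rw [PMF.map_comp, Sum.elim_comp_inr]
  refine sim_of_map (Sum.elim f g) ((hmap_inl P.init).symm ▸ hinit) ?_ ?_
  · rintro (x | y) a _ h
    · rcases h with ⟨μ, h, rfl⟩ | ⟨rfl, hx, rfl⟩
      · exact (hmap_inl μ).symm ▸ hf h
      · exact (hmap_inr Q.init).symm ▸ (hconnect x hx).weakStep
    · obtain ⟨ν, h, rfl⟩ := h
      exact (hmap_inr ν).symm ▸ hg h
  · rintro _ ⟨y, hy, rfl⟩
    exact hfinal y hy

end FunctionalSimulations

/-- the interchange law with respect to simulation: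
`(P ∥_A Q) · (P' ∥_A Q') ≤ (P · P') ∥_A (Q · Q')`. -/
theorem interchange_law {α σ₁ σ₂ σ₃ σ₄ : Type}
    (P : PAut α σ₁) (Q : PAut α σ₂) (P' : PAut α σ₃) (Q' : PAut α σ₄)
    (E A : Set α) (hA : A ⊆ E) :
    Sim (pseq (par A P Q) (par A P' Q'))
      (par A (pseq P P') (pseq Q Q')) := by
  have hleft := (isTransHom_pseq_inl P P').par (isTransHom_pseq_inl Q Q') A
  have hright := (isTransHom_pseq_inr P P').par (isTransHom_pseq_inr Q Q') A
  refine sim_pseq_of_maps (Prod.map Sum.inl Sum.inl) (Prod.map Sum.inr Sum.inr) ?init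
    (fun _ _ _ h => weakStep_of_trans (hleft h)) ?connect
    (fun _ _ _ h => weakStep_of_trans (hright h)) ?final
  case init =>
    have hmap : (par A P Q).init.map (Prod.map Sum.inl Sum.inl) =
        (par A (pseq P P') (pseq Q Q')).init := (pprod_map _ _ _ _).symm
    exact hmap ▸ .refl
  case connect =>
    rintro ⟨x, y⟩ ⟨hx, hy⟩
    have hτ := (weakTau_pseq_of_mem_final (Q := P') hx).par (A := A)
      (weakTau_pseq_of_mem_final (Q := Q') hy)
    rwa [pprod_pure, pprod_map] at hτ
  case final =>
    rintro ⟨x, y⟩ ⟨hx, hy⟩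
    refine ⟨_, .refl, ?_⟩
    rw [PMF.support_pure, Set.singleton_subset_iff]
    exact ⟨⟨x, hx, rfl⟩, ⟨y, hy, rfl⟩⟩

end PCKA
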